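/- Let f : X → Y be a continuous map between path-connected topological spaces. (a) If g : W → X is a continuous map from a path-connected space W admitting a right homotopy inverse (a continuous h : X → W with g ∘ h homotopic to id_X), then TC(f ∘ g) = TC(f). (b) If g : Y → Z is a continuous map to a path-connected space Z admitting a left homotopy inverse (a continuous h : Z → Y with h ∘ g homotopic to id_Y), then TC(g ∘ f) = TC(f). -/

import Mathlib

open scoped ENNReal

universe u v w

/-- Scott's pullback topological complexity of a continuous map `f : X → Y`: the least `n`
(or `∞`) such that `X × X` admits a cover by `n + 1` open sets, each carrying a continuous
map `s : Uᵢ → P(Y)` with `(s z) 0 = f z.1` and `(s z) 1 = f z.2`. -/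
noncomputable def topComplexityMap {X Y : Type*} [TopologicalSpace X] [TopologicalSpace Y]
    (f : C(X, Y)) : ℕ∞ :=
  sInf {n : ℕ∞ | ∃ m : ℕ, n = (m : ℕ∞) ∧
    ∃ U : Fin (m + 1) → Set (X × X), (∀ i, IsOpen (U i)) ∧ (⋃ i, U i) = Set.univ ∧
      ∀ i, ∃ s : C(U i, C(unitInterval, Y)),
        ∀ z : U i, (s z) 0 = f (z : X × X).1 ∧ (s z) 1 = f (z : X × X).2}

/-- A continuous family of paths from `a z` to `b z` is the same as a homotopy from `a` to `b`. -/
theorem exists_path_section_iff_homotopic {A Y : Type*} [TopologicalSpace A] [TopologicalSpace Y]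
    (a b : C(A, Y)) :
    (∃ s : C(A, C(unitInterval, Y)), ∀ z, (s z) 0 = a z ∧ (s z) 1 = b z) ↔ a.Homotopic b := by
  constructor
  · rintro ⟨s, hs⟩
    exact ⟨{ toContinuousMap := s.uncurry.comp ContinuousMap.prodSwap
             map_zero_left := fun z => (hs z).1
             map_one_left := fun z => (hs z).2 }⟩
  · rintro ⟨H⟩
    exact ⟨(H.toContinuousMap.comp ContinuousMap.prodSwap).curry,
      fun z => ⟨H.map_zero_left z, H.map_one_left z⟩⟩

/-- The map `z ↦ f z.1` on a subset `U` of `X × X`. -/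
def fstOn {X Y : Type*} [TopologicalSpace X] [TopologicalSpace Y] (f : C(X, Y))
    (U : Set (X × X)) : C(U, Y) :=
  f.comp (ContinuousMap.fst.comp ⟨Subtype.val, continuous_subtype_val⟩)

/-- The map `z ↦ f z.2` on a subset `U` of `X × X`. -/
def sndOn {X Y : Type*} [TopologicalSpace X] [TopologicalSpace Y] (f : C(X, Y))
    (U : Set (X × X)) : C(U, Y) :=
  f.comp (ContinuousMap.snd.comp ⟨Subtype.val, continuous_subtype_val⟩)

/-- To bound `TC(f)` by `TC(f')` it suffices to pull back, along a map of domains, open sets on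
which the coordinate restrictions are homotopic. -/
theorem topComplexityMap_le_of_preimage {X X' Y Y' : Type*} [TopologicalSpace X]
    [TopologicalSpace X'] [TopologicalSpace Y] [TopologicalSpace Y'] (f : C(X, Y)) (f' : C(X', Y'))
    (k : C(X, X'))
    (hk : ∀ U : Set (X' × X'), (fstOn f' U).Homotopic (sndOn f' U) →
      (fstOn f (Prod.map k k ⁻¹' U)).Homotopic (sndOn f (Prod.map k k ⁻¹' U))) :
    topComplexityMap f ≤ topComplexityMap f' := by
  refine sInf_le_sInf ?_
  rintro n ⟨m, rfl, U, hopen, hcover, hs⟩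
  refine ⟨m, rfl, fun i => Prod.map k k ⁻¹' U i,
    fun i => (hopen i).preimage (k.continuous.prodMap k.continuous), ?_, fun i => ?_⟩
  · rw [← Set.preimage_iUnion, hcover, Set.preimage_univ]
  · exact (exists_path_section_iff_homotopic (fstOn f _) (sndOn f _)).2
      (hk _ ((exists_path_section_iff_homotopic (fstOn f' _) (sndOn f' _)).1 (hs i)))

theorem topComplexityMap_comp_le_left {W X Y : Type*} [TopologicalSpace W] [TopologicalSpace X]
    [TopologicalSpace Y] (f : C(X, Y)) (g : C(W, X)) :
    topComplexityMap (f.comp g) ≤ topComplexityMap f :=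
  topComplexityMap_le_of_preimage _ _ g fun U hU =>
    hU.comp (.refl ⟨U.restrictPreimage (Prod.map g g),
      (g.continuous.prodMap g.continuous).restrictPreimage⟩)

theorem topComplexityMap_comp_le_right {X Y Z : Type*} [TopologicalSpace X] [TopologicalSpace Y]
    [TopologicalSpace Z] (g : C(Y, Z)) (f : C(X, Y)) :
    topComplexityMap (g.comp f) ≤ topComplexityMap f :=
  topComplexityMap_le_of_preimage _ _ (.id X) fun _ hU => (ContinuousMap.Homotopic.refl g).comp hU

theorem topComplexityMap_le_of_homotopic {X Y : Type*} [TopologicalSpace X] [TopologicalSpace Y]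
    {f f' : C(X, Y)} (hf : f.Homotopic f') : topComplexityMap f ≤ topComplexityMap f' :=
  topComplexityMap_le_of_preimage _ _ (.id X) fun _ hU =>
    ((hf.comp (.refl _)).trans hU).trans (hf.symm.comp (.refl _))

/-- (a) Precomposition with a map admitting a right homotopy inverse preserves `TC`;
(b) postcomposition with a map admitting a left homotopy inverse preserves `TC`. -/
theorem topComplexityMap_comp_right_left_homotopy_inverse
    {X : Type u} {Y : Type v} [TopologicalSpace X] [TopologicalSpace Y]
    [PathConnectedSpace X] [PathConnectedSpace Y] (f : C(X, Y)) :
    (∀ (W : Type w) (_ : TopologicalSpace W) (_ : PathConnectedSpace W)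
      (g : C(W, X)) (h : C(X, W)), (g.comp h).Homotopic (ContinuousMap.id X) →
        topComplexityMap (f.comp g) = topComplexityMap f) ∧
    (∀ (Z : Type w) (_ : TopologicalSpace Z) (_ : PathConnectedSpace Z)
      (g : C(Y, Z)) (h : C(Z, Y)), (h.comp g).Homotopic (ContinuousMap.id Y) →
        topComplexityMap (g.comp f) = topComplexityMap f) := by
  refine ⟨fun W _ _ g h H => le_antisymm (topComplexityMap_comp_le_left f g) ?_,
    fun Z _ _ g h H => le_antisymm (topComplexityMap_comp_le_right g f) ?_⟩
  · calc topComplexityMap f ≤ topComplexityMap ((f.comp g).comp h) :=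
          topComplexityMap_le_of_homotopic ((ContinuousMap.Homotopic.refl f).comp H.symm)
      _ ≤ topComplexityMap (f.comp g) := topComplexityMap_comp_le_left _ h
  · calc topComplexityMap f ≤ topComplexityMap (h.comp (g.comp f)) :=
          topComplexityMap_le_of_homotopic (H.symm.comp (.refl f))
      _ ≤ topComplexityMap (g.comp f) := topComplexityMap_comp_le_right h _
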